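/- There exist constants C > 0, K₁ > 1 and ν₀ ∈ (0,1], depending only on f and D, such that for every K ≥ K₁ and every ν ∈ (0,ν₀], the Lebesgue measure of the set L_K of times t ∈ [T₁,T₂] satisfying (i) K⁻¹ ≤ |u(t)|_{L∞} and max_x u_x(t,x) ≤ K, (ii) K⁻¹ν⁻¹ ≤ |u_x(t)|_{L∞} ≤ Kν⁻¹, and (iii) |u_xx(t)|_{L∞} ≤ Kν⁻², satisfies λ(L_K) ≥ C. -/

import Mathlib

open MeasureTheory Set
open scoped ENNReal

/-- The `L^p` norm (on the circle, i.e. over one period `(0,1]`) of the `m`-th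
derivative of a function `v : ℝ → ℝ` (identified with a function on `S¹ = ℝ/ℤ`). -/
noncomputable def sobLp (m : ℕ) (p : ℝ≥0∞) (v : ℝ → ℝ) : ℝ :=
  (eLpNorm (iteratedDeriv m v) p (volume.restrict (Ioc (0:ℝ) 1))).toReal

/-- `u` is a smooth, space-periodic, zero-mean-value solution of the generalised
Burgers equation `u_t + f'(u) u_x - ν u_xx = 0` with strongly convex `f` and
nonzero initial condition. -/
structure IsBurgersSolution (f : ℝ → ℝ) (σ ν : ℝ) (u : ℝ → ℝ → ℝ) : Prop where
  hf : ContDiff ℝ (⊤ : ℕ∞) f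
  hσ : 0 < σ
  hconv : ∀ y, σ ≤ iteratedDeriv 2 f y
  hν : 0 < ν
  hu : ContDiffOn ℝ (⊤ : ℕ∞) (Function.uncurry u) (Ici (0:ℝ) ×ˢ univ)
  hper : ∀ t x, u t (x + 1) = u t x
  hpde : ∀ t, 0 < t → ∀ x,
    deriv (fun s => u s x) t + deriv f (u t x) * deriv (u t) x
      - ν * deriv (deriv (u t)) x = 0
  hmean : ∀ t, 0 ≤ t → ∫ x in Ioc (0:ℝ) 1, u t x = 0
  hinit : ∃ x, u 0 x ≠ 0

/-- The quantity `D = max(|u₀|₁⁻¹, |u₀|_{1,∞})`. -/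
noncomputable def burgersD (u : ℝ → ℝ → ℝ) : ℝ :=
  max (sobLp 0 1 (u 0))⁻¹ (sobLp 1 ⊤ (u 0))

/-- `T₁ = D⁻² C̃⁻¹ / 4`. -/
noncomputable def burgersT₁ (D Ct : ℝ) : ℝ := (D ^ 2)⁻¹ * Ct⁻¹ / 4

/-- `T₂ = max(3T₁/2, 2Dσ⁻¹)`. -/
noncomputable def burgersT₂ (σ D Ct : ℝ) : ℝ :=
  max (3 / 2 * burgersT₁ D Ct) (2 * D * σ⁻¹)

/-- Time average over `[T₁, T₂]`. -/
noncomputable def timeAvg (T₁ T₂ : ℝ) (A : ℝ → ℝ) : ℝ :=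
  (T₂ - T₁)⁻¹ * ∫ t in T₁..T₂, A t

/-- The structure function `S_p(ℓ)`. -/
noncomputable def structFun (T₁ T₂ : ℝ) (u : ℝ → ℝ → ℝ) (p ℓ : ℝ) : ℝ :=
  timeAvg T₁ T₂ (fun t => ∫ x in Ioc (0:ℝ) 1, |u t (x + ℓ) - u t x| ^ p)

open scoped Topology

/-! Applied to the equations for `u_x` and for auxiliary functions, the maximum principle gives
`u_x ≤ D`, `t u_x ≤ 1/σ` and `-u_x ≲ 1/ν`, and by Bernstein's method `|u_xx| ≲ 1/ν²` for `t ≥ ν`.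
As `u` has mean zero and is periodic, an upper bound for `u_x` bounds `|u|`.

The energy `E = |u|₂²` satisfies `E' = -2 ν |u_x|₂²` and `E(0) ≥ |u₀|₁² ≥ D⁻²`. Since
`ν |u_x|₂² ≤ C̃`, the choice of `T₁` leaves `E(T₁) ≥ D⁻²/2`, while the decay `|u(t)| ≤ 1/(σ t)` and
the choice of `T₂` give `E(T₂) ≤ D⁻²/4`. Stopping at the time `T` at which `E = 3D⁻²/8`, a fixed
amount of energy is dissipated on `[T₁, T]`, at a rate at most `C̃`; so by Chebyshev's inequality
the rate `ν |u_x|₂²` is bounded below on a set of times of measure bounded below, and there `E` is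
still at least `D⁻²/4`. Finally `|u_x|₂² ≤ 2 D |u_x|_∞`, because `u_x` has mean zero and `u_x ≤ D`,
so a lower bound for the rate is one for `ν |u_x|_∞`. -/

/-! ### Calculus and integration -/

theorem periodic_deriv {F : Type*} [NormedAddCommGroup F] [NormedSpace ℝ F] {g : ℝ → F} {c : ℝ}
    (hg : Function.Periodic g c) : Function.Periodic (deriv g) c := fun x => by
  rw [← deriv_comp_add_const, funext hg]

theorem deriv_deriv_nonpos_of_isLocalMax {g : ℝ → ℝ} {x : ℝ} (hmax : IsLocalMax g x)
    (hg : ContinuousAt g x) : deriv (deriv g) x ≤ 0 := by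
  by_contra! hpos
  have hmin : IsLocalMin g x := isLocalMin_of_deriv_deriv_pos hpos hmax.deriv_eq_zero hg
  have hconst : g =ᶠ[𝓝 x] fun _ => g x := hmax.and hmin |>.mono fun _ h => le_antisymm h.1 h.2
  have hzero := hconst.deriv.deriv_eq
  simp only [deriv_const'] at hzero
  exact hpos.ne' hzero

theorem exists_mem_Icc_eq_zero_of_integral_eq_zero {g : ℝ → ℝ} {a b : ℝ} (hab : a < b)
    (hg : ContinuousOn g (Icc a b)) (hint : ∫ x in a..b, g x = 0) : ∃ x ∈ Icc a b, g x = 0 := by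
  rw [← uIcc_of_le hab.le] at hg ⊢
  obtain ⟨x, hx, hgx⟩ := exists_eq_const_mul_intervalIntegral_of_nonneg (μ := volume)
    (g := fun _ => (1 : ℝ)) hg intervalIntegrable_const fun _ _ => zero_le_one
  refine ⟨x, hx, ?_⟩
  simpa [hint, (sub_pos.2 hab).ne'] using hgx.symm

theorem abs_le_of_periodic_of_integral_eq_zero_of_deriv_le {g : ℝ → ℝ} {c M : ℝ} (hc : 0 < c)
    (hg : Differentiable ℝ g) (hper : Function.Periodic g c) (hmean : ∫ x in 0..c, g x = 0)
    (hM : ∀ x, deriv g x ≤ M) (x : ℝ) : |g x| ≤ M * c := by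
  have hincr {y z : ℝ} (hyz : y ≤ z) : g z - g y ≤ M * (z - y) :=
    image_sub_le_mul_sub_of_deriv_le hg hM hyz
  have hM0 : 0 ≤ M := by
    have := hincr (show x ≤ x + c by linarith)
    rw [hper x, sub_self, add_sub_cancel_left] at this
    exact nonneg_of_mul_nonneg_left this hc
  have hzero (a : ℝ) : ∃ z ∈ Icc a (a + c), g z = 0 :=
    exists_mem_Icc_eq_zero_of_integral_eq_zero (by linarith) hg.continuous.continuousOn
      (by rw [hper.intervalIntegral_add_eq a 0, zero_add, hmean])
  obtain ⟨y, hy, hgy⟩ := hzero (x - c)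
  obtain ⟨z, hz, hgz⟩ := hzero x
  have hyx : y ≤ x := by linarith [hy.2]
  refine abs_le'.2 ⟨?_, ?_⟩
  · calc g x = g x - g y := by rw [hgy, sub_zero]
      _ ≤ M * (x - y) := hincr hyx
      _ ≤ M * c := by gcongr; linarith [hy.1]
  · calc -g x = g z - g x := by rw [hgz, zero_sub]
      _ ≤ M * (z - x) := hincr hz.1
      _ ≤ M * c := by gcongr; linarith [hz.2]

section Measure

variable {α : Type*} [MeasurableSpace α] {μ : Measure α} [IsFiniteMeasure μ] {g : α → ℝ}

theorem integral_sq_le_of_integral_eq_zero {D S : ℝ} (hD : 0 ≤ D) (hg : Integrable g μ)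
    (hmean : ∫ x, g x ∂μ = 0) (hgD : ∀ᵐ x ∂μ, g x ≤ D) (hgS : ∀ᵐ x ∂μ, |g x| ≤ S) :
    ∫ x, g x ^ 2 ∂μ ≤ 2 * D * S * μ.real univ := by
  have hbound : ∀ᵐ x ∂μ, g x ^ 2 ≤ S * (2 * D - g x) := by
    filter_upwards [hgD, hgS] with x hxD hxS
    calc g x ^ 2 = |g x| * |g x| := by rw [← sq_abs, sq]
      _ ≤ S * (2 * D - g x) := by
        gcongr
        · exact (abs_nonneg _).trans hxS
        · exact abs_le'.2 ⟨by linarith, by linarith⟩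
  calc ∫ x, g x ^ 2 ∂μ ≤ ∫ x, S * (2 * D - g x) ∂μ :=
        integral_mono_of_nonneg (.of_forall fun x => sq_nonneg (g x))
          (((integrable_const _).sub hg).const_mul S) hbound
    _ = 2 * D * S * μ.real univ := by
        rw [integral_const_mul, integral_sub (integrable_const _) hg, hmean, integral_const,
          smul_eq_mul]
        ring

theorem integral_le_mul_measureReal_lt_add_mul_measureReal_ge {c B : ℝ} (hg : Integrable g μ)
    (hgB : ∀ᵐ x ∂μ, g x ≤ B) :
    ∫ x, g x ∂μ ≤ c * μ.real {x | g x < c} + B * μ.real {x | c ≤ g x} := by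
  have hlt : NullMeasurableSet {x | g x < c} μ :=
    nullMeasurableSet_lt hg.aemeasurable aemeasurable_const
  have hcompl : {x | g x < c}ᶜ = {x | c ≤ g x} := by ext; simp
  rw [← integral_add_compl₀ hlt hg, hcompl]
  gcongr
  · calc ∫ x in {x | g x < c}, g x ∂μ ≤ ∫ _ in {x | g x < c}, c ∂μ :=
          integral_mono_ae hg.integrableOn (integrable_const c)
            ((ae_restrict_mem₀ hlt).mono fun _ hx => le_of_lt hx)
      _ = c * μ.real {x | g x < c} := by rw [setIntegral_const, smul_eq_mul, mul_comm]
  · calc ∫ x in {x | c ≤ g x}, g x ∂μ ≤ ∫ _ in {x | c ≤ g x}, B ∂μ :=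
          integral_mono_ae hg.integrableOn (integrable_const B) (ae_restrict_of_ae hgB)
      _ = B * μ.real {x | c ≤ g x} := by rw [setIntegral_const, smul_eq_mul, mul_comm]

end Measure

theorem ofReal_le_volume_ge_of_integral_le {g : ℝ → ℝ} {a b c B : ℝ} (hab : a ≤ b) (hc : 0 ≤ c)
    (hB : 0 < B) (hg : ContinuousOn g (Icc a b)) (hgB : ∀ t ∈ Icc a b, g t ≤ B) :
    ENNReal.ofReal (((∫ t in a..b, g t) - c * (b - a)) / B) ≤
      volume {t | t ∈ Icc a b ∧ c ≤ g t} := by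
  refine ENNReal.ofReal_le_of_le_toReal ((div_le_iff₀ hB).2 (sub_le_iff_le_add'.2 ?_))
  have hrestrict : (volume.restrict (Icc a b)).real {t | c ≤ g t} =
      volume.real {t | t ∈ Icc a b ∧ c ≤ g t} := by
    rw [measureReal_restrict_apply' measurableSet_Icc, inter_comm]
    rfl
  calc ∫ t in a..b, g t = ∫ t in Icc a b, g t := by
        rw [intervalIntegral.integral_of_le hab, integral_Icc_eq_integral_Ioc]
    _ ≤ c * (volume.restrict (Icc a b)).real {t | g t < c} +
          B * (volume.restrict (Icc a b)).real {t | c ≤ g t} :=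
        integral_le_mul_measureReal_lt_add_mul_measureReal_ge hg.integrableOn_Icc
          ((ae_restrict_mem measurableSet_Icc).mono hgB)
    _ ≤ c * (volume.restrict (Icc a b)).real univ +
          B * (volume.restrict (Icc a b)).real {t | c ≤ g t} := by
        gcongr
        · exact measure_ne_top _ _
        · exact subset_univ _
    _ = c * (b - a) + (volume {t | t ∈ Icc a b ∧ c ≤ g t}).toReal * B := by
        rw [hrestrict, measureReal_restrict_apply_univ, Real.volume_real_Icc_of_le hab, mul_comm B]
        rfl

theorem memLp_restrict_Ioc_of_continuous {F : Type*} [NormedAddCommGroup F] {g : ℝ → F} {a b : ℝ}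
    (hg : Continuous g) (p : ℝ≥0∞) : MemLp g p (volume.restrict (Ioc a b)) := by
  obtain ⟨B, hB⟩ := (isCompact_Icc (a := a) (b := b)).exists_bound_of_continuousOn hg.continuousOn
  exact MemLp.of_bound hg.aestronglyMeasurable B <| (ae_restrict_mem measurableSet_Ioc).mono
    fun y hy => hB y (Ioc_subset_Icc_self hy)

theorem norm_le_toReal_eLpNorm_top_of_periodic {F : Type*} [NormedAddCommGroup F] {g : ℝ → F}
    {c : ℝ} (hc : 0 < c) (hg : Continuous g) (hper : Function.Periodic g c) (x : ℝ) :
    ‖g x‖ ≤ (eLpNorm g ⊤ (volume.restrict (Ioc 0 c))).toReal := by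
  have hfin : eLpNorm g ⊤ (volume.restrict (Ioc 0 c)) ≠ ⊤ :=
    (memLp_restrict_Ioc_of_continuous hg ⊤).eLpNorm_ne_top
  set S := (eLpNorm g ⊤ (volume.restrict (Ioc 0 c))).toReal
  have hae : ∀ᵐ y ∂volume.restrict (Ioc 0 c), ‖g y‖ ≤ S := by
    filter_upwards [ae_le_eLpNormEssSup (f := g) (μ := volume.restrict (Ioc 0 c))] with y hy
    rw [← eLpNorm_exponent_top] at hy
    simpa only [toReal_enorm] using ENNReal.toReal_mono hfin hy
  have hmin : EqOn (fun y => min ‖g y‖ S) (fun y => ‖g y‖) (Ioc 0 c) :=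
    Measure.eqOn_Ioc_of_ae_eq volume (hae.mono fun y hy => min_eq_left hy)
      (by fun_prop) (by fun_prop)
  obtain ⟨y, hy, hyx⟩ := hper.exists_mem_Ioc hc x 0
  rw [zero_add] at hy
  exact hyx ▸ min_eq_left_iff.1 (hmin hy)

theorem hasDerivAt_intervalIntegral_of_continuousOn {E : Type*} [NormedAddCommGroup E]
    [NormedSpace ℝ E] {F F' : ℝ → ℝ → E} {U : Set ℝ} {a b t : ℝ} (hU : U ∈ 𝓝 t)
    (hF : ∀ s ∈ U, ContinuousOn (F s) (uIcc a b))
    (hF' : ContinuousOn (Function.uncurry F') (U ×ˢ uIcc a b))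
    (hderiv : ∀ s ∈ U, ∀ x ∈ uIcc a b, HasDerivAt (fun r => F r x) (F' s x) s) :
    HasDerivAt (fun s => ∫ x in a..b, F s x) (∫ x in a..b, F' t x) t := by
  obtain ⟨K, hKt, hKU, hK⟩ := local_compact_nhds hU
  obtain ⟨B, hB⟩ := (hK.prod isCompact_uIcc).exists_bound_of_continuousOn
    (hF'.mono (prod_mono hKU Subset.rfl))
  have hmeas {g : ℝ → E} (hg : ContinuousOn g (uIcc a b)) :
      AEStronglyMeasurable g (volume.restrict (uIoc a b)) :=
    (hg.mono uIoc_subset_uIcc).aestronglyMeasurable measurableSet_uIoc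
  have htU : t ∈ U := mem_of_mem_nhds hU
  have hslice : ContinuousOn (F' t) (uIcc a b) :=
    hF'.comp (f := fun x => (t, x)) (by fun_prop) fun x hx => ⟨htU, hx⟩
  exact (intervalIntegral.hasDerivAt_integral_of_dominated_loc_of_deriv_le hKt
    (Filter.mem_of_superset hU fun s hs => hmeas (hF s hs)) (hF t htU).intervalIntegrable
    (hmeas hslice)
    (.of_forall fun x hx s hs => hB (s, x) ⟨hs, uIoc_subset_uIcc hx⟩) intervalIntegrable_const
    (.of_forall fun x hx s hs => hderiv s (hKU hs) x (uIoc_subset_uIcc hx))).2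

theorem continuousOn_intervalIntegral_Ici {E : Type*} [NormedAddCommGroup E] [NormedSpace ℝ E]
    {F : ℝ → ℝ → E} {a b c : ℝ} (hF : ContinuousOn (Function.uncurry F) (Ici c ×ˢ univ)) :
    ContinuousOn (fun t => ∫ x in a..b, F t x) (Ici c) := by
  have hclamp : Continuous fun p : ℝ × ℝ => F (max p.1 c) p.2 :=
    hF.comp_continuous (f := fun p : ℝ × ℝ => (max p.1 c, p.2)) (by fun_prop)
      fun p => mk_mem_prod (le_max_right p.1 c) (mem_univ p.2)
  refine (intervalIntegral.continuous_parametric_intervalIntegral_of_continuous'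
    (μ := volume) (f := fun t x => F (max t c) x) hclamp a b).continuousOn.congr fun t ht => ?_
  simp only [max_eq_left (mem_Ici.1 ht)]

theorem integral_comp_mul_deriv_eq_zero_of_eq {φ g g' : ℝ → ℝ} {a b : ℝ} (hφ : Continuous φ)
    (hg : ∀ x, HasDerivAt g (g' x) x) (hg' : Continuous g') (hab : g a = g b) :
    ∫ x in a..b, φ (g x) * g' x = 0 := by
  simpa only [hab, intervalIntegral.integral_same, Function.comp_apply] using
    intervalIntegral.integral_comp_mul_deriv (fun x _ => hg x) hg'.continuousOn hφ
      (a := a) (b := b)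

theorem nonneg_of_hasDerivAt_of_isMaxOn_Icc {g : ℝ → ℝ} {g' a t : ℝ} (hat : a < t)
    (hg : HasDerivAt g g' t) (hmax : IsMaxOn g (Icc a t) t) : 0 ≤ g' := by
  have hcone : a - t ∈ posTangentConeAt (Icc a t) t :=
    sub_mem_posTangentConeAt_of_segment_subset (by rw [segment_symm, segment_eq_Icc hat.le])
  have hle : (a - t) * g' ≤ 0 := by
    simpa using hmax.localize.hasFDerivWithinAt_nonpos hg.hasFDerivAt.hasFDerivWithinAt hcone
  exact nonneg_of_mul_nonpos_right hle (sub_neg.2 hat)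

theorem le_of_deriv_nonpos_of_isMaxOn {X : Type*} [TopologicalSpace X] {K : Set X}
    {Z Zt : ℝ → X → ℝ} {a b M : ℝ} (hK : IsCompact K)
    (hZ : ContinuousOn (Function.uncurry Z) (Icc a b ×ˢ K))
    (hZt : ∀ t ∈ Ioc a b, ∀ x ∈ K, HasDerivAt (fun s => Z s x) (Zt t x) t)
    (ha : ∀ x ∈ K, Z a x ≤ M)
    (hmax : ∀ t ∈ Ioc a b, ∀ x ∈ K, M < Z t x → IsMaxOn (Z t) K x → Zt t x ≤ 0) :
    ∀ t ∈ Icc a b, ∀ x ∈ K, Z t x ≤ M := by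
  intro t ht x hx
  suffices hslack : ∀ ε > 0, Z t x ≤ M + ε * (t - a) by
    have hlim : Filter.Tendsto (fun ε => M + ε * (t - a)) (𝓝[>] 0) (𝓝 M) := by
      have hcont : Continuous fun ε => M + ε * (t - a) := by fun_prop
      simpa using (hcont.tendsto 0).mono_left nhdsWithin_le_nhds
    exact ge_of_tendsto hlim (eventually_mem_nhdsWithin.mono hslack)
  intro ε hε
  obtain ⟨⟨s, y⟩, ⟨hs, hy⟩, hsy⟩ := (isCompact_Icc.prod hK).exists_isMaxOn ⟨(t, x), ht, hx⟩
    (f := fun q : ℝ × X => Z q.1 q.2 - ε * (q.1 - a)) (hZ.sub (by fun_prop))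
  have hbest {r z} (hr : r ∈ Icc a b) (hz : z ∈ K) :
      Z r z - ε * (r - a) ≤ Z s y - ε * (s - a) := hsy (show (r, z) ∈ Icc a b ×ˢ K from ⟨hr, hz⟩)
  suffices hle : Z s y - ε * (s - a) ≤ M by linarith [hbest ht hx]
  by_contra! hgt
  have has : a < s := by
    refine hs.1.lt_of_ne ?_
    rintro rfl
    exact hgt.not_ge (by simpa using ha y hy)
  have hM : M < Z s y := by linarith [mul_nonneg hε.le (sub_nonneg.2 has.le)]
  have hZt_nonpos : Zt s y ≤ 0 := hmax s ⟨has, hs.2⟩ y hy hM fun z hz => by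
    simpa using hbest hs hz
  have hderiv : HasDerivAt (fun r => Z r y - ε * (r - a)) (Zt s y - ε) s := by
    simpa using (hZt s ⟨has, hs.2⟩ y hy).fun_sub (((hasDerivAt_id s).sub_const a).const_mul ε)
  have hZt_pos : 0 ≤ Zt s y - ε := nonneg_of_hasDerivAt_of_isMaxOn_Icc has hderiv
    fun r hr => hbest ⟨hr.1, hr.2.trans hs.2⟩ hy
  linarith

/-! ### The advection–diffusion operator -/

/-- Smoothness, up to the boundary `t = 0`, of a function `w t x` of time `t ≥ 0` and space `x`. -/
def SmoothOnHalfPlane (w : ℝ → ℝ → ℝ) : Prop :=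
  ContDiffOn ℝ (⊤ : ℕ∞) (Function.uncurry w) (Ici 0 ×ˢ univ)

/-- The partial derivative `∂w/∂x` of a function `w t x` of time and space. -/
noncomputable def spaceDeriv (w : ℝ → ℝ → ℝ) (t : ℝ) : ℝ → ℝ := deriv (w t)

/-- The partial derivative `∂w/∂t` of a function `w t x` of time and space. -/
noncomputable def timeDeriv (w : ℝ → ℝ → ℝ) (t x : ℝ) : ℝ := deriv (fun s => w s x) t

local notation "∂ₓ" => spaceDeriv
local notation "∂ₜ" => timeDeriv

/-- The operator `∂ₜ + b ∂ₓ - ν ∂ₓ²` of advection by `b` and diffusion with viscosity `ν`. For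
`b = f' ∘ u` it is the linear operator which annihilates the solution `u` of the Burgers equation,
and through which the equations for the derivatives of `u` are written. -/
noncomputable def advDiff (ν : ℝ) (b Z : ℝ → ℝ → ℝ) (t x : ℝ) : ℝ :=
  ∂ₜ Z t x + b t x * ∂ₓ Z t x - ν * ∂ₓ (∂ₓ Z) t x

namespace SmoothOnHalfPlane

variable {Z W : ℝ → ℝ → ℝ} {t : ℝ}

theorem continuousOn (hZ : SmoothOnHalfPlane Z) {s : Set ℝ} (hs : s ⊆ Ici 0) (K : Set ℝ) :
    ContinuousOn (Function.uncurry Z) (s ×ˢ K) :=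
  (ContDiffOn.continuousOn hZ).mono (prod_mono hs (subset_univ K))

theorem contDiff_slice (hZ : SmoothOnHalfPlane Z) (ht : 0 ≤ t) : ContDiff ℝ (⊤ : ℕ∞) (Z t) :=
  contDiffOn_univ.1 <| ContDiffOn.comp (t := Ici 0 ×ˢ univ) hZ
    (contDiff_prodMk_right t).contDiffOn fun _ _ => ⟨ht, mem_univ _⟩

theorem continuous_slice (hZ : SmoothOnHalfPlane Z) (ht : 0 ≤ t) : Continuous (Z t) :=
  (hZ.contDiff_slice ht).continuous

theorem hasDerivAt_space (hZ : SmoothOnHalfPlane Z) (ht : 0 ≤ t) (x : ℝ) :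
    HasDerivAt (Z t) (∂ₓ Z t x) x :=
  ((hZ.contDiff_slice ht).differentiable (by simp) x).hasDerivAt

theorem contDiffAt (hZ : SmoothOnHalfPlane Z) (ht : 0 < t) (x : ℝ) :
    ContDiffAt ℝ (⊤ : ℕ∞) (Function.uncurry Z) (t, x) :=
  ContDiffOn.contDiffAt hZ (prod_mem_nhds (Ici_mem_nhds ht) Filter.univ_mem)

theorem hasDerivAt_time (hZ : SmoothOnHalfPlane Z) (ht : 0 < t) (x : ℝ) :
    HasDerivAt (fun s => Z s x) (∂ₜ Z t x) t :=
  (((hZ.contDiffAt ht x).differentiableAt (by simp)).comp (f := fun s => (s, x)) t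
    (by fun_prop)).hasDerivAt

protected theorem spaceDeriv (hZ : SmoothOnHalfPlane Z) : SmoothOnHalfPlane (∂ₓ Z) := by
  have hunique : UniqueDiffOn ℝ (Ici (0 : ℝ) ×ˢ (univ : Set ℝ)) :=
    (uniqueDiffOn_Ici 0).prod uniqueDiffOn_univ
  have hpartial := (ContDiffOn.fderivWithin hZ hunique (m := (⊤ : ℕ∞)) (by simp)).clm_apply
    (contDiffOn_const (c := ((0 : ℝ), (1 : ℝ))))
  refine hpartial.congr ?_
  rintro ⟨t, x⟩ ⟨ht, -⟩
  have hfderiv := (hZ.differentiableOn (by simp) (t, x) ⟨ht, mem_univ _⟩).hasFDerivWithinAt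
  have hpath : HasDerivAt (fun y : ℝ => (t, y)) ((0 : ℝ), (1 : ℝ)) x :=
    (hasDerivAt_const x t).prodMk (hasDerivAt_id x)
  have hcomp := hfderiv.comp_hasDerivWithinAt (s := univ) x hpath.hasDerivWithinAt
    fun y _ => ⟨ht, mem_univ _⟩
  exact (hasDerivWithinAt_univ.1 hcomp).deriv

theorem timeDeriv_eq_fderiv (hZ : SmoothOnHalfPlane Z) (ht : 0 < t) (x : ℝ) :
    ∂ₜ Z t x = fderiv ℝ (Function.uncurry Z) (t, x) (1, 0) := by
  have hpath : HasDerivAt (fun s : ℝ => (s, x)) ((1 : ℝ), (0 : ℝ)) t :=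
    (hasDerivAt_id t).prodMk (hasDerivAt_const t x)
  exact (((hZ.contDiffAt ht x).differentiableAt (by simp)).hasFDerivAt.comp_hasDerivAt
    (f := fun s => (s, x)) t hpath).deriv

theorem spaceDeriv_eq_fderiv (hZ : SmoothOnHalfPlane Z) (ht : 0 < t) (x : ℝ) :
    ∂ₓ Z t x = fderiv ℝ (Function.uncurry Z) (t, x) (0, 1) := by
  have hpath : HasDerivAt (fun y : ℝ => (t, y)) ((0 : ℝ), (1 : ℝ)) x :=
    (hasDerivAt_const x t).prodMk (hasDerivAt_id x)
  exact (((hZ.contDiffAt ht x).differentiableAt (by simp)).hasFDerivAt.comp_hasDerivAt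
    (f := fun y => (t, y)) x hpath).deriv

theorem differentiableAt_fderiv (hZ : SmoothOnHalfPlane Z) (ht : 0 < t) (x : ℝ) :
    DifferentiableAt ℝ (fderiv ℝ (Function.uncurry Z)) (t, x) :=
  ((hZ.contDiffAt ht x).fderiv_right (m := (⊤ : ℕ∞)) (by simp)).differentiableAt (by simp)

theorem continuousOn_timeDeriv (hZ : SmoothOnHalfPlane Z) :
    ContinuousOn (Function.uncurry (∂ₜ Z)) (Ioi 0 ×ˢ univ) := by
  have hfderiv : ContinuousOn (fderiv ℝ (Function.uncurry Z)) (Ioi 0 ×ˢ univ) := fun p hp =>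
    (hZ.differentiableAt_fderiv hp.1 p.2).continuousAt.continuousWithinAt
  exact (hfderiv.clm_apply continuousOn_const).congr fun p hp => hZ.timeDeriv_eq_fderiv hp.1 p.2

theorem hasDerivAt_timeDeriv (hZ : SmoothOnHalfPlane Z) (ht : 0 < t) (x : ℝ) :
    HasDerivAt (∂ₜ Z t) (∂ₜ (∂ₓ Z) t x) x := by
  set F := Function.uncurry Z
  have hfderiv : HasFDerivAt (fderiv ℝ F) (fderiv ℝ (fderiv ℝ F) (t, x)) (t, x) :=
    (hZ.differentiableAt_fderiv ht x).hasFDerivAt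
  have hsymm : IsSymmSndFDerivAt ℝ F (t, x) := (hZ.contDiffAt ht x).isSymmSndFDerivAt (by
    simpa using WithTop.coe_le_coe.2 (le_top (a := (2 : ℕ∞))))
  have htime : HasDerivAt (fun s => fderiv ℝ F (s, x) (0, 1))
      (fderiv ℝ (fderiv ℝ F) (t, x) (1, 0) (0, 1)) t :=
    (ContinuousLinearMap.apply ℝ ℝ ((0 : ℝ), (1 : ℝ))).hasFDerivAt.comp_hasDerivAt t
      (hfderiv.comp_hasDerivAt (f := fun s => (s, x)) t
        ((hasDerivAt_id t).prodMk (hasDerivAt_const t x)))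
  have hspace : HasDerivAt (fun y => fderiv ℝ F (t, y) (1, 0))
      (fderiv ℝ (fderiv ℝ F) (t, x) (0, 1) (1, 0)) x :=
    (ContinuousLinearMap.apply ℝ ℝ ((1 : ℝ), (0 : ℝ))).hasFDerivAt.comp_hasDerivAt x
      (hfderiv.comp_hasDerivAt (f := fun y => (t, y)) x
        ((hasDerivAt_const x t).prodMk (hasDerivAt_id x)))
  have hmixed : ∂ₜ (∂ₓ Z) t x = fderiv ℝ (fderiv ℝ F) (t, x) (1, 0) (0, 1) :=
    (htime.congr_of_eventuallyEq ((eventually_gt_nhds ht).mono fun s hs =>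
      hZ.spaceDeriv_eq_fderiv hs x)).deriv
  rw [hmixed, hsymm (1, 0) (0, 1), show ∂ₜ Z t = _ from funext (hZ.timeDeriv_eq_fderiv ht)]
  exact hspace

protected theorem add (hZ : SmoothOnHalfPlane Z) (hW : SmoothOnHalfPlane W) :
    SmoothOnHalfPlane (Z + W) := ContDiffOn.add hZ hW

protected theorem sub (hZ : SmoothOnHalfPlane Z) (hW : SmoothOnHalfPlane W) :
    SmoothOnHalfPlane (Z - W) := ContDiffOn.sub hZ hW

protected theorem mul (hZ : SmoothOnHalfPlane Z) (hW : SmoothOnHalfPlane W) :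
    SmoothOnHalfPlane (Z * W) := ContDiffOn.mul hZ hW

protected theorem pow (hZ : SmoothOnHalfPlane Z) (n : ℕ) : SmoothOnHalfPlane (Z ^ n) :=
  ContDiffOn.pow hZ n

protected theorem const_smul (c : ℝ) (hZ : SmoothOnHalfPlane Z) : SmoothOnHalfPlane (c • Z) :=
  ContDiffOn.const_smul c hZ

theorem of_time {φ : ℝ → ℝ} (hφ : ContDiff ℝ (⊤ : ℕ∞) φ) : SmoothOnHalfPlane fun t _ => φ t :=
  (hφ.comp contDiff_fst).contDiffOn

end SmoothOnHalfPlane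

section AdvDiff

variable {ν : ℝ} {b Z W : ℝ → ℝ → ℝ} {t x : ℝ}

theorem advDiff_eq_of_hasDerivAt {g : ℝ → ℝ} {zt zxx : ℝ} (hzt : HasDerivAt (fun s => Z s x) zt t)
    (hg : ∀ y, HasDerivAt (Z t) (g y) y) (hzxx : HasDerivAt g zxx x) :
    advDiff ν b Z t x = zt + b t x * g x - ν * zxx := by
  have hspace : ∂ₓ Z t = g := funext fun y => (hg y).deriv
  have hspace₂ : ∂ₓ (∂ₓ Z) t x = zxx := by rw [spaceDeriv, hspace, hzxx.deriv]
  rw [advDiff, hspace₂, hspace, timeDeriv, hzt.deriv]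

theorem advDiff_add (hZ : SmoothOnHalfPlane Z) (hW : SmoothOnHalfPlane W) (ht : 0 < t) :
    advDiff ν b (Z + W) t x = advDiff ν b Z t x + advDiff ν b W t x := by
  rw [advDiff_eq_of_hasDerivAt (Z := Z + W)
    ((hZ.hasDerivAt_time ht x).add (hW.hasDerivAt_time ht x))
    (fun y => (hZ.hasDerivAt_space ht.le y).add (hW.hasDerivAt_space ht.le y))
    ((hZ.spaceDeriv.hasDerivAt_space ht.le x).fun_add (hW.spaceDeriv.hasDerivAt_space ht.le x)),
    advDiff, advDiff]
  ring

theorem advDiff_const_smul (c : ℝ) (hZ : SmoothOnHalfPlane Z) (ht : 0 < t) :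
    advDiff ν b (c • Z) t x = c * advDiff ν b Z t x := by
  rw [advDiff_eq_of_hasDerivAt (Z := c • Z) ((hZ.hasDerivAt_time ht x).const_mul c)
    (fun y => (hZ.hasDerivAt_space ht.le y).const_mul c)
    ((hZ.spaceDeriv.hasDerivAt_space ht.le x).const_mul c), advDiff]
  ring

theorem advDiff_sub (hZ : SmoothOnHalfPlane Z) (hW : SmoothOnHalfPlane W) (ht : 0 < t) :
    advDiff ν b (Z - W) t x = advDiff ν b Z t x - advDiff ν b W t x := by
  rw [sub_eq_add_neg, ← neg_one_smul ℝ W, advDiff_add hZ (hW.const_smul _) ht,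
    advDiff_const_smul _ hW ht]
  ring

theorem advDiff_mul (hZ : SmoothOnHalfPlane Z) (hW : SmoothOnHalfPlane W) (ht : 0 < t) :
    advDiff ν b (Z * W) t x = advDiff ν b Z t x * W t x + Z t x * advDiff ν b W t x -
      2 * ν * (∂ₓ Z t x * ∂ₓ W t x) := by
  have hZx := hZ.hasDerivAt_space ht.le
  have hWx := hW.hasDerivAt_space ht.le
  rw [advDiff_eq_of_hasDerivAt (Z := Z * W)
    ((hZ.hasDerivAt_time ht x).mul (hW.hasDerivAt_time ht x))
    (fun y => (hZx y).mul (hWx y))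
    (((hZ.spaceDeriv.hasDerivAt_space ht.le x).fun_mul (hWx x)).fun_add
      ((hZx x).fun_mul (hW.spaceDeriv.hasDerivAt_space ht.le x))), advDiff, advDiff]
  ring

theorem advDiff_sq (hZ : SmoothOnHalfPlane Z) (ht : 0 < t) :
    advDiff ν b (Z ^ 2) t x = 2 * Z t x * advDiff ν b Z t x - 2 * ν * ∂ₓ Z t x ^ 2 := by
  rw [sq, advDiff_mul hZ hZ ht]
  ring

theorem advDiff_time {φ : ℝ → ℝ} {φ' : ℝ} (hφ : HasDerivAt φ φ' t) :
    advDiff ν b (fun s _ => φ s) t x = φ' := by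
  rw [advDiff_eq_of_hasDerivAt hφ (fun y => hasDerivAt_const y (φ t)) (hasDerivAt_const x 0)]
  ring

theorem advDiff_time_mul {φ : ℝ → ℝ} (hφ : ContDiff ℝ (⊤ : ℕ∞) φ) (hW : SmoothOnHalfPlane W)
    (ht : 0 < t) : advDiff ν b ((fun s _ => φ s) * W) t x =
      deriv φ t * W t x + φ t * advDiff ν b W t x := by
  rw [advDiff_mul (.of_time hφ) hW ht, advDiff_time (hφ.differentiable (by simp) t).hasDerivAt,
    spaceDeriv, deriv_const]
  ring

theorem advDiff_spaceDeriv (hZ : SmoothOnHalfPlane Z) (ht : 0 < t)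
    (hb : DifferentiableAt ℝ (b t) x) :
    advDiff ν b (∂ₓ Z) t x = ∂ₓ (advDiff ν b Z) t x - ∂ₓ b t x * ∂ₓ Z t x := by
  have hderiv : HasDerivAt (advDiff ν b Z t) (∂ₜ (∂ₓ Z) t x +
      (∂ₓ b t x * ∂ₓ Z t x + b t x * ∂ₓ (∂ₓ Z) t x) - ν * ∂ₓ (∂ₓ (∂ₓ Z)) t x) x :=
    ((hZ.hasDerivAt_timeDeriv ht x).add
      (hb.hasDerivAt.mul (hZ.spaceDeriv.hasDerivAt_space ht.le x))).sub
      ((hZ.spaceDeriv.spaceDeriv.hasDerivAt_space ht.le x).const_mul ν)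
  rw [advDiff, show ∂ₓ (advDiff ν b Z) t x = _ from hderiv.deriv]
  ring

theorem le_of_advDiff_nonpos {a c M : ℝ} (hν : 0 ≤ ν) (hZ : SmoothOnHalfPlane Z) (hc : 0 < c)
    (hper : ∀ t, Function.Periodic (Z t) c) (ha : 0 ≤ a) (hZa : ∀ x, Z a x ≤ M)
    (hL : ∀ s ∈ Ioc a t, ∀ y, M < Z s y → advDiff ν b Z s y ≤ 0) (hat : a ≤ t) : Z t x ≤ M := by
  have hmax : ∀ s ∈ Ioc a t, ∀ y ∈ Icc 0 c, M < Z s y → IsMaxOn (Z s) (Icc 0 c) y →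
      ∂ₜ Z s y ≤ 0 := by
    intro s hs y _ hM hy
    have hs0 : 0 < s := ha.trans_lt hs.1
    have hlocal : IsLocalMax (Z s) y := .of_forall fun z => by
      obtain ⟨w, hw, hzw⟩ := (hper s).exists_mem_Ico₀ hc z
      exact hzw ▸ hy (Ico_subset_Icc_self hw)
    have hfirst : ∂ₓ Z s y = 0 := hlocal.deriv_eq_zero
    have hsecond : ∂ₓ (∂ₓ Z) s y ≤ 0 :=
      deriv_deriv_nonpos_of_isLocalMax hlocal (hZ.continuous_slice hs0.le).continuousAt
    have hLy := hL s hs y hM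
    rw [advDiff, hfirst] at hLy
    linarith [mul_nonpos_of_nonneg_of_nonpos hν hsecond]
  obtain ⟨y, hy, hxy⟩ := (hper t).exists_mem_Ico₀ hc x
  rw [hxy]
  exact le_of_deriv_nonpos_of_isMaxOn isCompact_Icc
    (hZ.continuousOn (Icc_subset_Ici_self.trans (Ici_subset_Ici.2 ha)) _)
    (fun s hs y _ => hZ.hasDerivAt_time (ha.trans_lt hs.1) y) (fun y _ => hZa y) hmax t
    ⟨hat, le_rfl⟩ y (Ico_subset_Icc_self hy)

theorem le_add_mul_of_advDiff_le {a B c M : ℝ} (hν : 0 ≤ ν) (hZ : SmoothOnHalfPlane Z)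
    (hc : 0 < c) (hper : ∀ t, Function.Periodic (Z t) c) (ha : 0 ≤ a) (hZa : ∀ x, Z a x ≤ M)
    (hL : ∀ s ∈ Ioc a t, ∀ y, advDiff ν b Z s y ≤ B) (hat : a ≤ t) :
    Z t x ≤ M + B * (t - a) := by
  have hτ : SmoothOnHalfPlane fun s _ => s - a := .of_time (by fun_prop)
  refine sub_le_iff_le_add.1 <| le_of_advDiff_nonpos (b := b) (Z := Z - B • fun s _ => s - a)
    (t := t) (x := x) hν (hZ.sub (hτ.const_smul B)) hc
    (fun s y => congrArg (· - B * (s - a)) (hper s y)) ha (fun y => ?_) (fun s hs y _ => ?_) hat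
  · change Z a y - B * (a - a) ≤ M
    linarith [hZa y]
  · have hs0 : 0 < s := ha.trans_lt hs.1
    rw [advDiff_sub hZ (hτ.const_smul B) hs0, advDiff_const_smul B hτ hs0,
      advDiff_time (φ := fun r => r - a) ((hasDerivAt_id s).sub_const a), mul_one]
    exact sub_nonpos.2 (hL s hs y)

end AdvDiff

/-! ### Pointwise bounds for the Burgers equation -/

theorem hasDerivAt_iteratedDeriv {f : ℝ → ℝ} (hf : ContDiff ℝ (⊤ : ℕ∞) f) (n : ℕ) (y : ℝ) :
    HasDerivAt (iteratedDeriv n f) (iteratedDeriv (n + 1) f y) y := by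
  rw [iteratedDeriv_succ]
  exact (hf.differentiable_iteratedDeriv n (mod_cast WithTop.coe_lt_top _) y).hasDerivAt

theorem bernstein_source_le {A B₂ B₃ S ν θ τ f₂ f₃ v p : ℝ} (hA : 0 ≤ A)
    (hAν : A * ν = 1 + 3 * θ * B₂ * S) (hτ : τ ∈ Icc 0 θ) (hv : |v| ≤ S) (hf₂ : |f₂| ≤ B₂)
    (hf₃ : |f₃| ≤ B₃) :
    p ^ 2 + τ * (2 * p * (-(f₃ * v ^ 3) - 3 * f₂ * v * p)) +
      A * (2 * v * -(f₂ * v ^ 2) - 2 * ν * p ^ 2) ≤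
      θ ^ 2 * B₃ ^ 2 * S ^ 6 + 2 * A * B₂ * S ^ 3 := by
  obtain ⟨hτ0, hτθ⟩ := hτ
  have hθ : 0 ≤ θ := hτ0.trans hτθ
  have hB₂ : 0 ≤ B₂ := (abs_nonneg _).trans hf₂
  have hB₃ : 0 ≤ B₃ := (abs_nonneg _).trans hf₃
  have hf₂v : |τ * f₂ * v| ≤ θ * B₂ * S := by
    rw [abs_mul, abs_mul, abs_of_nonneg hτ0]; gcongr
  have hf₃v : |τ * f₃ * v ^ 3| ≤ θ * B₃ * S ^ 3 := by
    rw [abs_mul, abs_mul, abs_pow, abs_of_nonneg hτ0]; gcongr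
  have hf₂vvv : |f₂ * v ^ 3| ≤ B₂ * S ^ 3 := by
    rw [abs_mul, abs_pow]; gcongr
  have hyoung : -(2 * (τ * f₃ * v ^ 3) * p) ≤ p ^ 2 + (θ * B₃ * S ^ 3) ^ 2 := by
    linarith [sq_nonneg (p + τ * f₃ * v ^ 3), sq_le_sq' (abs_le.1 hf₃v).1 (abs_le.1 hf₃v).2]
  have hquadratic : -(τ * f₂ * v) * p ^ 2 ≤ θ * B₂ * S * p ^ 2 :=
    mul_le_mul_of_nonneg_right ((neg_le_abs _).trans hf₂v) (sq_nonneg p)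
  have hcubic : A * -(f₂ * v ^ 3) ≤ A * (B₂ * S ^ 3) :=
    mul_le_mul_of_nonneg_left ((neg_le_abs _).trans hf₂vvv) hA
  have hdiffusion : A * ν * p ^ 2 = p ^ 2 + 3 * (θ * B₂ * S * p ^ 2) := by rw [hAν]; ring
  linarith

/-- The velocity `f'(u)` which transports a solution `u` of the Burgers equation. -/
noncomputable def burgersDrift (f : ℝ → ℝ) (u : ℝ → ℝ → ℝ) (t x : ℝ) : ℝ := deriv f (u t x)

namespace IsBurgersSolution

variable {f : ℝ → ℝ} {σ ν D S t x : ℝ} {u : ℝ → ℝ → ℝ}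

theorem smooth (h : IsBurgersSolution f σ ν u) : SmoothOnHalfPlane u := h.hu

theorem periodic_spaceDeriv (h : IsBurgersSolution f σ ν u) (t : ℝ) :
    Function.Periodic (∂ₓ u t) 1 :=
  periodic_deriv (h.hper t)

theorem periodic_spaceDeriv_spaceDeriv (h : IsBurgersSolution f σ ν u) (t : ℝ) :
    Function.Periodic (∂ₓ (∂ₓ u) t) 1 :=
  periodic_deriv (h.periodic_spaceDeriv t)

theorem hasDerivAt_iteratedDeriv_comp (h : IsBurgersSolution f σ ν u) (n : ℕ) (ht : 0 ≤ t)
    (x : ℝ) : HasDerivAt (fun y => iteratedDeriv n f (u t y))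
      (iteratedDeriv (n + 1) f (u t x) * ∂ₓ u t x) x :=
  (hasDerivAt_iteratedDeriv h.hf n (u t x)).comp x (h.smooth.hasDerivAt_space ht x)

theorem hasDerivAt_drift (h : IsBurgersSolution f σ ν u) (ht : 0 ≤ t) (x : ℝ) :
    HasDerivAt (burgersDrift f u t) (iteratedDeriv 2 f (u t x) * ∂ₓ u t x) x := by
  have hcomp := h.hasDerivAt_iteratedDeriv_comp 1 ht x
  rwa [iteratedDeriv_one] at hcomp

theorem spaceDeriv_drift (h : IsBurgersSolution f σ ν u) (ht : 0 ≤ t) (x : ℝ) :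
    ∂ₓ (burgersDrift f u) t x = iteratedDeriv 2 f (u t x) * ∂ₓ u t x :=
  (h.hasDerivAt_drift ht x).deriv

theorem advDiff_self (h : IsBurgersSolution f σ ν u) (ht : 0 < t) (x : ℝ) :
    advDiff ν (burgersDrift f u) u t x = 0 := h.hpde t ht x

theorem advDiff_spaceDeriv (h : IsBurgersSolution f σ ν u) (ht : 0 < t) (x : ℝ) :
    advDiff ν (burgersDrift f u) (∂ₓ u) t x =
      -(iteratedDeriv 2 f (u t x) * ∂ₓ u t x ^ 2) := by
  have hself : advDiff ν (burgersDrift f u) u t = 0 := funext (h.advDiff_self ht)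
  rw [_root_.advDiff_spaceDeriv h.smooth ht (h.hasDerivAt_drift ht.le x).differentiableAt,
    h.spaceDeriv_drift ht.le, spaceDeriv, hself, Pi.zero_def, deriv_const]
  ring

theorem advDiff_spaceDeriv_spaceDeriv (h : IsBurgersSolution f σ ν u) (ht : 0 < t) (x : ℝ) :
    advDiff ν (burgersDrift f u) (∂ₓ (∂ₓ u)) t x =
      -(iteratedDeriv 3 f (u t x) * ∂ₓ u t x ^ 3) -
        3 * iteratedDeriv 2 f (u t x) * ∂ₓ u t x * ∂ₓ (∂ₓ u) t x := by
  have hfirst : advDiff ν (burgersDrift f u) (∂ₓ u) t = fun y =>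
      -(iteratedDeriv 2 f (u t y) * ∂ₓ u t y ^ 2) := funext (h.advDiff_spaceDeriv ht)
  have hderiv := ((h.hasDerivAt_iteratedDeriv_comp 2 ht.le x).fun_mul
    ((h.smooth.spaceDeriv.hasDerivAt_space ht.le x).fun_pow 2)).fun_neg
  rw [_root_.advDiff_spaceDeriv h.smooth.spaceDeriv ht
    (h.hasDerivAt_drift ht.le x).differentiableAt, h.spaceDeriv_drift ht.le, spaceDeriv, hfirst,
    hderiv.deriv]
  ring

theorem spaceDeriv_le (h : IsBurgersSolution f σ ν u) (hinit : ∀ x, ∂ₓ u 0 x ≤ D)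
    (ht : 0 ≤ t) (x : ℝ) : ∂ₓ u t x ≤ D :=
  le_of_advDiff_nonpos h.hν.le h.smooth.spaceDeriv one_pos h.periodic_spaceDeriv le_rfl hinit
    (fun s hs y _ => by
      rw [h.advDiff_spaceDeriv hs.1]
      exact neg_nonpos.2 (mul_nonneg (h.hσ.le.trans (h.hconv _)) (sq_nonneg _))) ht

theorem mul_spaceDeriv_le (h : IsBurgersSolution f σ ν u) (ht : 0 ≤ t) (x : ℝ) :
    t * ∂ₓ u t x ≤ σ⁻¹ := by
  refine le_of_advDiff_nonpos (b := burgersDrift f u) (Z := (fun s _ => s) * ∂ₓ u) h.hν.le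
    ((SmoothOnHalfPlane.of_time contDiff_id).mul h.smooth.spaceDeriv) one_pos
    (fun s y => congrArg (s * ·) (h.periodic_spaceDeriv s y)) le_rfl
    (fun y => by simp [h.hσ.le]) (fun s hs y hy => ?_) ht
  have hlarge : 1 < σ * (s * ∂ₓ u s y) := (inv_lt_iff_one_lt_mul₀' h.hσ).1 hy
  have hpos : 0 < ∂ₓ u s y :=
    pos_of_mul_pos_right (pos_of_mul_pos_right (one_pos.trans hlarge) h.hσ.le) hs.1.le
  have hconv : σ * (s * ∂ₓ u s y) ≤ iteratedDeriv 2 f (u s y) * (s * ∂ₓ u s y) := by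
    gcongr
    · exact mul_nonneg hs.1.le hpos.le
    · exact h.hconv _
  calc advDiff ν (burgersDrift f u) ((fun s _ => s) * ∂ₓ u) s y
      = ∂ₓ u s y * (1 - iteratedDeriv 2 f (u s y) * (s * ∂ₓ u s y)) := by
        rw [advDiff_time_mul (φ := fun s => s) contDiff_id h.smooth.spaceDeriv hs.1,
          h.advDiff_spaceDeriv hs.1, deriv_id'']
        ring
    _ ≤ 0 := mul_nonpos_of_nonneg_of_nonpos hpos.le (by linarith)

theorem abs_le_of_spaceDeriv_le (h : IsBurgersSolution f σ ν u) (ht : 0 ≤ t)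
    (hD : ∀ x, ∂ₓ u t x ≤ D) (x : ℝ) : |u t x| ≤ D := by
  simpa only [mul_one] using abs_le_of_periodic_of_integral_eq_zero_of_deriv_le one_pos
    ((h.smooth.contDiff_slice ht).differentiable (by simp)) (h.hper t)
    ((intervalIntegral.integral_of_le zero_le_one).trans (h.hmean t ht)) hD x

theorem neg_spaceDeriv_le {M : ℝ} (h : IsBurgersSolution f σ ν u) (hM : 0 ≤ M)
    (hinit : ∀ x, |∂ₓ u 0 x| ≤ D) (hu : ∀ t, 0 ≤ t → ∀ x, |u t x| ≤ D)
    (hf'' : ∀ y, |y| ≤ D → iteratedDeriv 2 f y ≤ 2 * ν * M) (ht : 0 ≤ t) (x : ℝ) :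
    -∂ₓ u t x ≤ D + M * D ^ 2 := by
  have hZ : (M • u ^ 2 - ∂ₓ u) t x ≤ D + M * D ^ 2 := by
    refine le_of_advDiff_nonpos (b := burgersDrift f u) h.hν.le
      (((h.smooth.pow 2).const_smul M).sub h.smooth.spaceDeriv) one_pos (fun s y => ?_) le_rfl
      (fun y => ?_) (fun s hs y _ => ?_) ht
    · change M * u s (y + 1) ^ 2 - ∂ₓ u s (y + 1) = M * u s y ^ 2 - ∂ₓ u s y
      rw [h.hper, h.periodic_spaceDeriv]
    · have hsq : M * u 0 y ^ 2 ≤ M * D ^ 2 :=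
        mul_le_mul_of_nonneg_left (sq_le_sq.2 ((hu 0 le_rfl y).trans (le_abs_self D))) hM
      change M * u 0 y ^ 2 - ∂ₓ u 0 y ≤ D + M * D ^ 2
      linarith [neg_abs_le (∂ₓ u 0 y), hinit y]
    · rw [advDiff_sub ((h.smooth.pow 2).const_smul M) h.smooth.spaceDeriv hs.1,
        advDiff_const_smul M (h.smooth.pow 2) hs.1, advDiff_sq h.smooth hs.1,
        h.advDiff_self hs.1, h.advDiff_spaceDeriv hs.1]
      have hcoef : iteratedDeriv 2 f (u s y) * ∂ₓ u s y ^ 2 ≤ 2 * ν * M * ∂ₓ u s y ^ 2 :=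
        mul_le_mul_of_nonneg_right (hf'' _ (hu s hs.1.le y)) (sq_nonneg _)
      linarith
  change M * u t x ^ 2 - ∂ₓ u t x ≤ D + M * D ^ 2 at hZ
  linarith [mul_nonneg hM (sq_nonneg (u t x))]

/-- Bernstein's device: `(t - a) u_xx² + A u_x²` is a subsolution up to a constant source, since the
term `-2 A ν u_xx²` coming from the diffusion of `u_x²` absorbs everything quadratic in `u_xx`. -/
theorem mul_sq_spaceDeriv_spaceDeriv_le {A B₂ B₃ a θ : ℝ} (h : IsBurgersSolution f σ ν u)
    (ha : 0 ≤ a) (hθ : 0 ≤ θ) (hA : 0 ≤ A) (hAν : A * ν = 1 + 3 * θ * B₂ * S)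
    (hS : ∀ t, 0 ≤ t → ∀ x, |∂ₓ u t x| ≤ S)
    (hB₂ : ∀ t, 0 ≤ t → ∀ x, |iteratedDeriv 2 f (u t x)| ≤ B₂)
    (hB₃ : ∀ t, 0 ≤ t → ∀ x, |iteratedDeriv 3 f (u t x)| ≤ B₃) (x : ℝ) :
    θ * ∂ₓ (∂ₓ u) (a + θ) x ^ 2 ≤
      A * S ^ 2 + (θ ^ 2 * B₃ ^ 2 * S ^ 6 + 2 * A * B₂ * S ^ 3) * θ := by
  have hv := h.smooth.spaceDeriv
  have hp := hv.spaceDeriv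
  have hφ : ContDiff ℝ (⊤ : ℕ∞) fun s => s - a := by fun_prop
  have hτp := (SmoothOnHalfPlane.of_time hφ).mul (hp.pow 2)
  have hAv := (hv.pow 2).const_smul A
  have hZ := le_add_mul_of_advDiff_le (b := burgersDrift f u) (t := a + θ) (x := x) (M := A * S ^ 2)
    (B := θ ^ 2 * B₃ ^ 2 * S ^ 6 + 2 * A * B₂ * S ^ 3) h.hν.le (hτp.add hAv) one_pos
    (fun s y => ?_) ha (fun y => ?_) (fun s hs y => ?_) (by linarith)
  · change (a + θ - a) * ∂ₓ (∂ₓ u) (a + θ) x ^ 2 + A * ∂ₓ u (a + θ) x ^ 2 ≤ _ at hZ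
    rw [add_sub_cancel_left] at hZ
    linarith [mul_nonneg hA (sq_nonneg (∂ₓ u (a + θ) x))]
  · change (s - a) * ∂ₓ (∂ₓ u) s (y + 1) ^ 2 + A * ∂ₓ u s (y + 1) ^ 2 =
      (s - a) * ∂ₓ (∂ₓ u) s y ^ 2 + A * ∂ₓ u s y ^ 2
    rw [h.periodic_spaceDeriv, h.periodic_spaceDeriv_spaceDeriv]
  · change (a - a) * ∂ₓ (∂ₓ u) a y ^ 2 + A * ∂ₓ u a y ^ 2 ≤ A * S ^ 2
    rw [sub_self, zero_mul, zero_add]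
    exact mul_le_mul_of_nonneg_left
      (sq_le_sq.2 ((hS a ha y).trans (le_abs_self S))) hA
  · have hs0 : 0 < s := ha.trans_lt hs.1
    have hτ : s - a ∈ Icc 0 θ := ⟨sub_nonneg.2 hs.1.le, sub_le_iff_le_add'.2 hs.2⟩
    have hsource := bernstein_source_le (p := ∂ₓ (∂ₓ u) s y) hA hAν hτ (hS s hs0.le y)
      (hB₂ s hs0.le y) (hB₃ s hs0.le y)
    have hdissipation : 0 ≤ (s - a) * (2 * ν * ∂ₓ (∂ₓ (∂ₓ u)) s y ^ 2) :=
      mul_nonneg hτ.1 (mul_nonneg (mul_nonneg zero_le_two h.hν.le) (sq_nonneg _))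
    rw [advDiff_add hτp hAv hs0, advDiff_time_mul hφ (hp.pow 2) hs0, advDiff_sq hp hs0,
      advDiff_const_smul A (hv.pow 2) hs0, advDiff_sq hv hs0, h.advDiff_spaceDeriv_spaceDeriv hs0,
      h.advDiff_spaceDeriv hs0, deriv_sub_const, deriv_id'']
    change 1 * ∂ₓ (∂ₓ u) s y ^ 2 + _ + _ ≤ _
    linarith

end IsBurgersSolution

/-! ### Norms over one period -/

instance isProbabilityMeasure_volume_restrict_Ioc_zero_one :
    IsProbabilityMeasure (volume.restrict (Ioc (0 : ℝ) 1)) :=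
  ⟨by simp⟩

section SobLp

variable {v : ℝ → ℝ} {m : ℕ}

theorem sobLp_two_sq (hv : Continuous (iteratedDeriv m v)) :
    sobLp m 2 v ^ 2 = ∫ x in (0 : ℝ)..1, iteratedDeriv m v x ^ 2 := by
  rw [sobLp, toReal_eLpNorm hv.aestronglyMeasurable, lpNorm_eq_integral_norm_rpow_toReal
    two_ne_zero ENNReal.ofNat_ne_top hv.aestronglyMeasurable,
    intervalIntegral.integral_of_le zero_le_one]
  simp only [ENNReal.toReal_ofNat, Real.norm_eq_abs, Real.rpow_ofNat, sq_abs]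
  exact mod_cast Real.rpow_inv_natCast_pow (integral_nonneg fun _ => sq_nonneg _) two_ne_zero

theorem sobLp_mono {p q : ℝ≥0∞} (hv : Continuous (iteratedDeriv m v)) (hpq : p ≤ q) :
    sobLp m p v ≤ sobLp m q v :=
  ENNReal.toReal_mono (memLp_restrict_Ioc_of_continuous hv q).eLpNorm_ne_top
    (eLpNorm_le_eLpNorm_of_exponent_le hpq hv.aestronglyMeasurable)

theorem sobLp_top_le {M : ℝ} (hM : ∀ x, |iteratedDeriv m v x| ≤ M) : sobLp m ⊤ v ≤ M :=
  ENNReal.toReal_le_of_le_ofReal ((abs_nonneg _).trans (hM 0))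
    (eLpNormEssSup_le_of_ae_bound (.of_forall hM))

theorem abs_iteratedDeriv_le_sobLp_top (hv : Continuous (iteratedDeriv m v))
    (hper : Function.Periodic (iteratedDeriv m v) 1) (x : ℝ) :
    |iteratedDeriv m v x| ≤ sobLp m ⊤ v :=
  norm_le_toReal_eLpNorm_top_of_periodic one_pos hv hper x

end SobLp

theorem exists_forall_abs_iteratedDeriv_le {f : ℝ → ℝ} (hf : ContDiff ℝ (⊤ : ℕ∞) f) (n : ℕ)
    (D : ℝ) : ∃ B, 0 ≤ B ∧ ∀ y, |y| ≤ D → |iteratedDeriv n f y| ≤ B := by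
  obtain ⟨B, hB⟩ := (isCompact_Icc (a := -D) (b := D)).exists_bound_of_continuousOn
    (hf.continuous_iteratedDeriv n (mod_cast le_top)).continuousOn
  exact ⟨max B 0, le_max_right _ _, fun y hy => (hB y (abs_le.1 hy)).trans (le_max_left _ _)⟩

namespace IsBurgersSolution

variable {f : ℝ → ℝ} {σ ν D t : ℝ} {u : ℝ → ℝ → ℝ}

theorem abs_spaceDeriv_le_sobLp_top (h : IsBurgersSolution f σ ν u) (ht : 0 ≤ t) (x : ℝ) :
    |∂ₓ u t x| ≤ sobLp 1 ⊤ (u t) := by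
  have hone : iteratedDeriv 1 (u t) = ∂ₓ u t := iteratedDeriv_one
  simpa only [hone] using abs_iteratedDeriv_le_sobLp_top (m := 1) (v := u t)
    (by simpa only [hone] using h.smooth.spaceDeriv.continuous_slice ht)
    (by simpa only [hone] using h.periodic_spaceDeriv t) x

theorem sobLp_zero_one_pos (h : IsBurgersSolution f σ ν u) : 0 < sobLp 0 1 (u 0) := by
  have hcont : Continuous (u 0) := h.smooth.continuous_slice le_rfl
  obtain ⟨x, hx⟩ := h.hinit
  obtain ⟨y, hy, hxy⟩ := Function.Periodic.exists_mem_Ico₀ (h.hper 0) one_pos x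
  rw [sobLp, iteratedDeriv_zero, toReal_eLpNorm hcont.aestronglyMeasurable,
    lpNorm_one_eq_integral_norm hcont.aestronglyMeasurable,
    ← intervalIntegral.integral_of_le zero_le_one]
  exact intervalIntegral.integral_pos zero_lt_one (by fun_prop) (fun _ _ => norm_nonneg _)
    ⟨y, Ico_subset_Icc_self hy, norm_pos_iff.2 (hxy ▸ hx)⟩

theorem pos_of_burgersD_le (h : IsBurgersSolution f σ ν u) (hD : burgersD u ≤ D) : 0 < D :=
  (inv_pos.2 h.sobLp_zero_one_pos).trans_le ((le_max_left _ _).trans hD)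

theorem abs_spaceDeriv_zero_le (h : IsBurgersSolution f σ ν u) (hD : burgersD u ≤ D) (x : ℝ) :
    |∂ₓ u 0 x| ≤ D :=
  (h.abs_spaceDeriv_le_sobLp_top le_rfl x).trans ((le_max_right _ _).trans hD)

theorem spaceDeriv_le_of_burgersD_le (h : IsBurgersSolution f σ ν u) (hD : burgersD u ≤ D)
    (ht : 0 ≤ t) (x : ℝ) : ∂ₓ u t x ≤ D :=
  h.spaceDeriv_le (fun y => le_of_abs_le (h.abs_spaceDeriv_zero_le hD y)) ht x

theorem abs_le_of_burgersD_le (h : IsBurgersSolution f σ ν u) (hD : burgersD u ≤ D)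
    (ht : 0 ≤ t) (x : ℝ) : |u t x| ≤ D :=
  h.abs_le_of_spaceDeriv_le ht (h.spaceDeriv_le_of_burgersD_le hD ht) x

end IsBurgersSolution

theorem exists_sobLp_one_top_le {f : ℝ → ℝ} (hf : ContDiff ℝ (⊤ : ℕ∞) f) (D : ℝ) :
    ∃ A, ∀ σ ν u, IsBurgersSolution f σ ν u → burgersD u ≤ D → ν ≤ 1 →
      ∀ t, 0 ≤ t → sobLp 1 ⊤ (u t) ≤ A * ν⁻¹ := by
  obtain ⟨B, hB0, hB⟩ := exists_forall_abs_iteratedDeriv_le hf 2 D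
  refine ⟨D + B / 2 * D ^ 2, fun σ ν u h hD hν t ht => sobLp_top_le fun x => ?_⟩
  have hν0 : ν ≠ 0 := h.hν.ne'
  have hDν : D ≤ D * ν⁻¹ :=
    le_mul_of_one_le_right (h.pos_of_burgersD_le hD).le ((one_le_inv₀ h.hν).2 hν)
  have hM : 0 ≤ B / (2 * ν) := div_nonneg hB0 (mul_nonneg zero_le_two h.hν.le)
  have hlower := h.neg_spaceDeriv_le hM (h.abs_spaceDeriv_zero_le hD)
    (fun s hs => h.abs_le_of_burgersD_le hD hs)
    (fun y hy => (le_of_abs_le (hB y hy)).trans_eq (by field_simp)) ht x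
  have hupper := h.spaceDeriv_le_of_burgersD_le hD ht x
  have hsplit : (D + B / 2 * D ^ 2) * ν⁻¹ = D * ν⁻¹ + B / (2 * ν) * D ^ 2 := by field_simp
  rw [hsplit, iteratedDeriv_one]
  exact abs_le'.2 ⟨hupper.trans (by linarith [mul_nonneg hM (sq_nonneg D)]),
    hlower.trans (by linarith)⟩

theorem exists_sobLp_two_top_le {f : ℝ → ℝ} (hf : ContDiff ℝ (⊤ : ℕ∞) f) (D : ℝ) :
    ∃ R, ∀ σ ν u, IsBurgersSolution f σ ν u → burgersD u ≤ D → ν ≤ 1 →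
      ∀ t, ν ≤ t → sobLp 2 ⊤ (u t) ≤ R * (ν ^ 2)⁻¹ := by
  obtain ⟨A, hA⟩ := exists_sobLp_one_top_le hf D
  obtain ⟨B₂, hB₂0, hB₂⟩ := exists_forall_abs_iteratedDeriv_le hf 2 D
  obtain ⟨B₃, -, hB₃⟩ := exists_forall_abs_iteratedDeriv_le hf 3 D
  set c := 1 + 3 * B₂ * A with hc
  set Q := c * A ^ 2 + B₃ ^ 2 * A ^ 6 + 2 * c * B₂ * A ^ 3 with hQ
  refine ⟨√Q, fun σ ν u h hD hν t ht => sobLp_top_le fun x => ?_⟩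
  have hν0 : ν ≠ 0 := h.hν.ne'
  have hA0 : 0 ≤ A := nonneg_of_mul_nonneg_left
    (ENNReal.toReal_nonneg.trans (hA σ ν u h hD hν 0 le_rfl)) (inv_pos.2 h.hν)
  have hc0 : 0 ≤ c := by positivity
  have hQ0 : 0 ≤ Q := by positivity
  have hbernstein := h.mul_sq_spaceDeriv_spaceDeriv_le (a := t - ν) (θ := ν) (A := c * ν⁻¹)
    (sub_nonneg.2 ht) h.hν.le (mul_nonneg hc0 (inv_nonneg.2 h.hν.le)) (by rw [hc]; field_simp)
    (fun s hs y => (h.abs_spaceDeriv_le_sobLp_top hs y).trans (hA σ ν u h hD hν s hs))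
    (fun s hs y => hB₂ _ (h.abs_le_of_burgersD_le hD hs y))
    (fun s hs y => hB₃ _ (h.abs_le_of_burgersD_le hD hs y)) x
  rw [iteratedDeriv_succ, iteratedDeriv_one]
  rw [sub_add_cancel] at hbernstein
  refine abs_le_of_sq_le_sq (le_of_mul_le_mul_left (hbernstein.trans_eq ?_) h.hν)
    (mul_nonneg (Real.sqrt_nonneg Q) (inv_nonneg.2 (sq_nonneg ν)))
  rw [mul_pow (√Q), Real.sq_sqrt hQ0, hQ]
  field_simp
  ring

/-! ### The energy balance -/

/-- The energy `∫₀¹ w(t, x)² dx` at time `t` of a function `w` which has period `1` in space. -/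
noncomputable def energy (w : ℝ → ℝ → ℝ) (t : ℝ) : ℝ := ∫ x in (0 : ℝ)..1, w t x ^ 2

theorem energy_nonneg (w : ℝ → ℝ → ℝ) (t : ℝ) : 0 ≤ energy w t :=
  intervalIntegral.integral_nonneg zero_le_one fun _ _ => sq_nonneg _

theorem SmoothOnHalfPlane.continuousOn_energy {w : ℝ → ℝ → ℝ} (hw : SmoothOnHalfPlane w) :
    ContinuousOn (energy w) (Ici 0) :=
  continuousOn_intervalIntegral_Ici ((hw.continuousOn Subset.rfl univ).pow 2)

theorem SmoothOnHalfPlane.hasDerivAt_energy {w : ℝ → ℝ → ℝ} {t : ℝ} (hw : SmoothOnHalfPlane w)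
    (ht : 0 < t) : HasDerivAt (energy w) (∫ x in (0 : ℝ)..1, 2 * w t x * ∂ₜ w t x) t := by
  refine hasDerivAt_intervalIntegral_of_continuousOn (F := fun s x => w s x ^ 2)
    (F' := fun s x => 2 * w s x * ∂ₜ w s x) (Ioi_mem_nhds ht)
    (fun s hs => ((hw.continuous_slice (le_of_lt hs)).pow 2).continuousOn)
    (((hw.continuousOn Ioi_subset_Ici_self _).const_mul 2).mul
      (hw.continuousOn_timeDeriv.mono (prod_mono Subset.rfl (subset_univ _)))) fun s hs x _ => ?_
  simpa only [Nat.cast_ofNat, Nat.add_one_sub_one, pow_one] using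
    (hw.hasDerivAt_time hs x).fun_pow 2

namespace IsBurgersSolution

variable {f : ℝ → ℝ} {σ ν D t : ℝ} {u : ℝ → ℝ → ℝ}

theorem timeDeriv_eq (h : IsBurgersSolution f σ ν u) (ht : 0 < t) (x : ℝ) :
    ∂ₜ u t x = ν * ∂ₓ (∂ₓ u) t x - deriv f (u t x) * ∂ₓ u t x := by
  linarith [show ∂ₜ u t x + deriv f (u t x) * ∂ₓ u t x - ν * ∂ₓ (∂ₓ u) t x = 0 from h.hpde t ht x]

theorem slice_zero_eq_slice_one (h : IsBurgersSolution f σ ν u) (t : ℝ) : u t 0 = u t 1 := by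
  simpa only [zero_add] using (h.hper t 0).symm

theorem integral_mul_spaceDeriv_spaceDeriv (h : IsBurgersSolution f σ ν u) (ht : 0 ≤ t) :
    ∫ x in (0 : ℝ)..1, u t x * ∂ₓ (∂ₓ u) t x = -energy (∂ₓ u) t := by
  have hu := h.smooth.spaceDeriv
  have hper : ∂ₓ u t 1 = ∂ₓ u t 0 := by simpa only [zero_add] using h.periodic_spaceDeriv t 0
  rw [intervalIntegral.integral_mul_deriv_eq_deriv_mul
    (fun x _ => h.smooth.hasDerivAt_space ht x) (fun x _ => hu.hasDerivAt_space ht x)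
    ((hu.continuous_slice ht).intervalIntegrable 0 1)
    ((hu.spaceDeriv.continuous_slice ht).intervalIntegrable 0 1), hper,
    h.slice_zero_eq_slice_one, sub_self, zero_sub]
  simp only [energy, sq]

theorem hasDerivAt_energy (h : IsBurgersSolution f σ ν u) (ht : 0 < t) :
    HasDerivAt (energy u) (-(2 * ν) * energy (∂ₓ u) t) t := by
  have hf' : Continuous (deriv f) := h.hf.continuous_deriv (by simp)
  have hu := h.smooth.continuous_slice ht.le
  have hux := h.smooth.spaceDeriv.continuous_slice ht.le
  have huxx := h.smooth.spaceDeriv.spaceDeriv.continuous_slice ht.le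
  have htransport : ∫ x in (0 : ℝ)..1, u t x * deriv f (u t x) * ∂ₓ u t x = 0 :=
    integral_comp_mul_deriv_eq_zero_of_eq (φ := fun y => y * deriv f y) (by fun_prop)
      (h.smooth.hasDerivAt_space ht.le) hux (h.slice_zero_eq_slice_one t)
  convert h.smooth.hasDerivAt_energy ht using 1
  calc -(2 * ν) * energy (∂ₓ u) t
      = 2 * ν * (∫ x in (0 : ℝ)..1, u t x * ∂ₓ (∂ₓ u) t x) -
          2 * ∫ x in (0 : ℝ)..1, u t x * deriv f (u t x) * ∂ₓ u t x := by
        rw [htransport, h.integral_mul_spaceDeriv_spaceDeriv ht.le]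
        ring
    _ = ∫ x in (0 : ℝ)..1, 2 * u t x * ∂ₜ u t x := by
        rw [← intervalIntegral.integral_const_mul, ← intervalIntegral.integral_const_mul,
          ← intervalIntegral.integral_sub (Continuous.intervalIntegrable (by fun_prop) 0 1)
            (Continuous.intervalIntegrable (by fun_prop) 0 1)]
        refine intervalIntegral.integral_congr fun x _ => ?_
        simp only [h.timeDeriv_eq ht]
        ring

theorem energy_sub_energy (h : IsBurgersSolution f σ ν u) {a b : ℝ} (ha : 0 ≤ a) (hab : a ≤ b) :
    energy u a - energy u b = 2 * ∫ t in a..b, ν * energy (∂ₓ u) t := by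
  have hsub : Icc a b ⊆ Ici 0 := Icc_subset_Ici_self.trans (Ici_subset_Ici.2 ha)
  have hint : IntervalIntegrable (fun t => -(2 * ν) * energy (∂ₓ u) t) volume a b :=
    ((h.smooth.spaceDeriv.continuousOn_energy.mono hsub).const_mul _).intervalIntegrable_of_Icc hab
  have hftc := intervalIntegral.integral_eq_sub_of_hasDerivAt_of_le hab
    (h.smooth.continuousOn_energy.mono hsub)
    (fun t ht => h.hasDerivAt_energy (ha.trans_lt ht.1)) hint
  rw [intervalIntegral.integral_const_mul] at hftc ⊢
  linarith

theorem antitoneOn_energy (h : IsBurgersSolution f σ ν u) : AntitoneOn (energy u) (Ici 0) := by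
  intro a ha b _ hab
  rw [← sub_nonneg, h.energy_sub_energy ha hab]
  exact mul_nonneg zero_le_two (intervalIntegral.integral_nonneg hab fun t _ =>
    mul_nonneg h.hν.le (energy_nonneg _ t))

theorem energy_eq_sobLp_sq (h : IsBurgersSolution f σ ν u) (ht : 0 ≤ t) :
    energy u t = sobLp 0 2 (u t) ^ 2 := by
  simp only [sobLp_two_sq (m := 0) (v := u t) (by simpa using h.smooth.continuous_slice ht),
    iteratedDeriv_zero, energy]

theorem energy_spaceDeriv_eq_sobLp_sq (h : IsBurgersSolution f σ ν u) (ht : 0 ≤ t) :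
    energy (∂ₓ u) t = sobLp 1 2 (u t) ^ 2 := by
  have hone : iteratedDeriv 1 (u t) = ∂ₓ u t := iteratedDeriv_one
  rw [sobLp_two_sq (hone ▸ h.smooth.spaceDeriv.continuous_slice ht), hone, energy]

theorem mul_energy_spaceDeriv_le {A : ℝ} (h : IsBurgersSolution f σ ν u) (ht : 0 ≤ t)
    (hA : sobLp 1 2 (u t) ^ 2 ≤ A * ν⁻¹) : ν * energy (∂ₓ u) t ≤ A := by
  rwa [h.energy_spaceDeriv_eq_sobLp_sq ht, mul_comm, ← le_div_iff₀ h.hν, div_eq_mul_inv]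

theorem energy_le_sobLp_top_sq (h : IsBurgersSolution f σ ν u) (ht : 0 ≤ t) :
    energy u t ≤ sobLp 0 ⊤ (u t) ^ 2 := by
  rw [h.energy_eq_sobLp_sq ht]
  exact pow_le_pow_left₀ ENNReal.toReal_nonneg
    (sobLp_mono (by simpa using h.smooth.continuous_slice ht) le_top) 2

theorem le_sobLp_top_of_sq_le_energy (h : IsBurgersSolution f σ ν u) (ht : 0 ≤ t) {m : ℝ}
    (hm : m ^ 2 ≤ energy u t) : m ≤ sobLp 0 ⊤ (u t) :=
  (le_abs_self m).trans
    (abs_le_of_sq_le_sq (hm.trans (h.energy_le_sobLp_top_sq ht)) ENNReal.toReal_nonneg)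

theorem inv_sq_le_energy_zero (h : IsBurgersSolution f σ ν u) (hD : burgersD u ≤ D) :
    (D ^ 2)⁻¹ ≤ energy u 0 := by
  have hL1 : D⁻¹ ≤ sobLp 0 1 (u 0) :=
    inv_le_of_inv_le₀ h.sobLp_zero_one_pos ((le_max_left _ _).trans hD)
  rw [h.energy_eq_sobLp_sq le_rfl, ← inv_pow]
  exact pow_le_pow_left₀ (inv_nonneg.2 (h.pos_of_burgersD_le hD).le) (hL1.trans
    (sobLp_mono (by simpa using h.smooth.continuous_slice le_rfl) one_le_two)) 2

theorem energy_le_inv_sq (h : IsBurgersSolution f σ ν u) (ht : 0 < t) :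
    energy u t ≤ (σ * t)⁻¹ ^ 2 := by
  have hspace (x : ℝ) : ∂ₓ u t x ≤ (σ * t)⁻¹ := by
    rw [mul_inv, ← div_eq_mul_inv, le_div_iff₀' ht]
    exact h.mul_spaceDeriv_le ht.le x
  have hsup : sobLp 0 ⊤ (u t) ≤ (σ * t)⁻¹ := sobLp_top_le fun x => by
    simpa only [iteratedDeriv_zero] using h.abs_le_of_spaceDeriv_le ht.le hspace x
  exact (h.energy_le_sobLp_top_sq ht.le).trans (pow_le_pow_left₀ ENNReal.toReal_nonneg hsup 2)

theorem energy_spaceDeriv_le_sobLp_top (h : IsBurgersSolution f σ ν u) (hD : burgersD u ≤ D)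
    (ht : 0 ≤ t) : energy (∂ₓ u) t ≤ 2 * D * sobLp 1 ⊤ (u t) := by
  have hcont := h.smooth.spaceDeriv.continuous_slice ht
  have hmean : ∫ x in Ioc (0 : ℝ) 1, ∂ₓ u t x = 0 := by
    rw [← intervalIntegral.integral_of_le zero_le_one,
      intervalIntegral.integral_eq_sub_of_hasDerivAt
        (fun x _ => h.smooth.hasDerivAt_space ht x) (hcont.intervalIntegrable 0 1),
      h.slice_zero_eq_slice_one, sub_self]
  have hsq := integral_sq_le_of_integral_eq_zero (h.pos_of_burgersD_le hD).le
    (memLp_one_iff_integrable.1 (memLp_restrict_Ioc_of_continuous hcont 1)) hmean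
    (.of_forall (h.spaceDeriv_le_of_burgersD_le hD ht))
    (.of_forall (h.abs_spaceDeriv_le_sobLp_top ht))
  rwa [probReal_univ, mul_one, ← intervalIntegral.integral_of_le zero_le_one] at hsq

theorem div_mul_inv_le_sobLp_one_top {c : ℝ} (h : IsBurgersSolution f σ ν u) (hD : burgersD u ≤ D)
    (ht : 0 ≤ t) (hc : c ≤ ν * energy (∂ₓ u) t) : c / (2 * D) * ν⁻¹ ≤ sobLp 1 ⊤ (u t) := by
  have hD0 := h.pos_of_burgersD_le hD
  rw [← div_eq_mul_inv, div_div, div_le_iff₀' (mul_pos (mul_pos two_pos hD0) h.hν)]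
  calc c ≤ ν * energy (∂ₓ u) t := hc
    _ ≤ ν * (2 * D * sobLp 1 ⊤ (u t)) :=
        mul_le_mul_of_nonneg_left (h.energy_spaceDeriv_le_sobLp_top hD ht) h.hν.le
    _ = 2 * D * ν * sobLp 1 ⊤ (u t) := by ring

end IsBurgersSolution

/-! ### Dissipative times -/

section Times

variable {σ D Ct : ℝ}

theorem burgersT₁_pos (hD : 0 < D) (hCt : 0 < Ct) : 0 < burgersT₁ D Ct := by
  unfold burgersT₁
  positivity

theorem burgersT₁_lt_burgersT₂ (hD : 0 < D) (hCt : 0 < Ct) :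
    burgersT₁ D Ct < burgersT₂ σ D Ct :=
  (by linarith [burgersT₁_pos hD hCt] : burgersT₁ D Ct < 3 / 2 * burgersT₁ D Ct).trans_le
    (le_max_left _ _)

end Times

namespace IsBurgersSolution

variable {f : ℝ → ℝ} {σ ν D Ct : ℝ} {u : ℝ → ℝ → ℝ}

theorem energy_burgersT₁_ge (h : IsBurgersSolution f σ ν u) (hD : burgersD u ≤ D) (hCt : 0 < Ct)
    (hdiss : ∀ t, 0 ≤ t → ν * energy (∂ₓ u) t ≤ Ct) :
    (D ^ 2)⁻¹ / 2 ≤ energy u (burgersT₁ D Ct) := by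
  have hT₁ := (burgersT₁_pos (h.pos_of_burgersD_le hD) hCt).le
  have hloss : ∫ t in (0 : ℝ)..burgersT₁ D Ct, ν * energy (∂ₓ u) t ≤ Ct * burgersT₁ D Ct := by
    calc ∫ t in (0 : ℝ)..burgersT₁ D Ct, ν * energy (∂ₓ u) t
        ≤ ∫ _ in (0 : ℝ)..burgersT₁ D Ct, Ct :=
          intervalIntegral.integral_mono_on hT₁
            (((h.smooth.spaceDeriv.continuousOn_energy.mono Icc_subset_Ici_self).const_mul
              ν).intervalIntegrable_of_Icc hT₁)
            intervalIntegrable_const fun t ht => hdiss t ht.1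
      _ = Ct * burgersT₁ D Ct := by
          rw [intervalIntegral.integral_const, sub_zero, smul_eq_mul, mul_comm]
  have hbudget : Ct * burgersT₁ D Ct = (D ^ 2)⁻¹ / 4 := by
    rw [burgersT₁]
    field_simp
  linarith [h.energy_sub_energy le_rfl hT₁, h.inv_sq_le_energy_zero hD]

theorem energy_burgersT₂_le (h : IsBurgersSolution f σ ν u) (hD : burgersD u ≤ D) :
    energy u (burgersT₂ σ D Ct) ≤ (D ^ 2)⁻¹ / 4 := by
  have hD0 := h.pos_of_burgersD_le hD
  have hT₂ : 2 * D * σ⁻¹ ≤ burgersT₂ σ D Ct := le_max_right _ _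
  have hσT₂ : 2 * D ≤ σ * burgersT₂ σ D Ct := by
    rwa [← div_eq_mul_inv, div_le_iff₀' h.hσ] at hT₂
  have hT₂0 : 0 < burgersT₂ σ D Ct :=
    (mul_pos (mul_pos two_pos hD0) (inv_pos.2 h.hσ)).trans_le hT₂
  calc energy u (burgersT₂ σ D Ct) ≤ (σ * burgersT₂ σ D Ct)⁻¹ ^ 2 := h.energy_le_inv_sq hT₂0
    _ ≤ (2 * D)⁻¹ ^ 2 := by
        gcongr
        exact inv_nonneg.2 (mul_nonneg h.hσ.le hT₂0.le)
    _ = (D ^ 2)⁻¹ / 4 := by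
        field_simp
        norm_num

theorem exists_energy_eq (h : IsBurgersSolution f σ ν u) (hD : burgersD u ≤ D) (hCt : 0 < Ct)
    (hdiss : ∀ t, 0 ≤ t → ν * energy (∂ₓ u) t ≤ Ct) :
    ∃ T ∈ Icc (burgersT₁ D Ct) (burgersT₂ σ D Ct), energy u T = 3 / 8 * (D ^ 2)⁻¹ := by
  have hD0 := h.pos_of_burgersD_le hD
  have hcont : ContinuousOn (energy u) (Icc (burgersT₁ D Ct) (burgersT₂ σ D Ct)) :=
    h.smooth.continuousOn_energy.mono
      (Icc_subset_Ici_self.trans (Ici_subset_Ici.2 (burgersT₁_pos hD0 hCt).le))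
  have hD2 : 0 < (D ^ 2)⁻¹ := by positivity
  exact intermediate_value_Icc' (burgersT₁_lt_burgersT₂ hD0 hCt).le hcont
    ⟨by linarith [h.energy_burgersT₂_le (Ct := Ct) hD],
      by linarith [h.energy_burgersT₁_ge hD hCt hdiss]⟩

theorem ofReal_le_volume_energy_ge_and_energy_spaceDeriv_ge (h : IsBurgersSolution f σ ν u)
    (hD : burgersD u ≤ D) (hCt : 0 < Ct) (hdiss : ∀ t, 0 ≤ t → ν * energy (∂ₓ u) t ≤ Ct) :
    ENNReal.ofReal ((D ^ 2)⁻¹ / (32 * Ct)) ≤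
      volume {t | t ∈ Icc (burgersT₁ D Ct) (burgersT₂ σ D Ct) ∧ (2 * D)⁻¹ ^ 2 ≤ energy u t ∧
        (D ^ 2)⁻¹ / (32 * (burgersT₂ σ D Ct - burgersT₁ D Ct)) ≤ ν * energy (∂ₓ u) t} := by
  have hD0 := h.pos_of_burgersD_le hD
  have hT₁ := burgersT₁_pos hD0 hCt
  have hT₁₂ := sub_pos.2 (burgersT₁_lt_burgersT₂ (σ := σ) hD0 hCt)
  have hE₁ := h.energy_burgersT₁_ge hD hCt hdiss
  obtain ⟨T, hT, hET⟩ := h.exists_energy_eq hD hCt hdiss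
  set T₁ := burgersT₁ D Ct
  set T₂ := burgersT₂ σ D Ct
  set c := (D ^ 2)⁻¹ / (32 * (T₂ - T₁)) with hc
  have hc0 : 0 ≤ c := by positivity
  have hcontinuous : ContinuousOn (fun t => ν * energy (∂ₓ u) t) (Icc T₁ T) :=
    (h.smooth.spaceDeriv.continuousOn_energy.mono
      (Icc_subset_Ici_self.trans (Ici_subset_Ici.2 hT₁.le))).const_mul ν
  have hlow : c * (T - T₁) ≤ (D ^ 2)⁻¹ / 32 := by
    calc c * (T - T₁) ≤ c * (T₂ - T₁) := by gcongr; exact hT.2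
      _ = (D ^ 2)⁻¹ / 32 := by rw [hc]; field_simp
  have hE (t : ℝ) (ht : t ∈ Icc T₁ T) : (2 * D)⁻¹ ^ 2 ≤ energy u t := by
    calc (2 * D)⁻¹ ^ 2 = (D ^ 2)⁻¹ / 4 := by field_simp; norm_num
      _ ≤ energy u T := by rw [hET]; linarith [inv_pos.2 (pow_pos hD0 2)]
      _ ≤ energy u t := h.antitoneOn_energy (hT₁.le.trans ht.1) (hT₁.le.trans hT.1) ht.2
  have hdissipated : (D ^ 2)⁻¹ / 16 ≤ ∫ t in T₁..T, ν * energy (∂ₓ u) t := by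
    linarith [h.energy_sub_energy hT₁.le hT.1]
  have hchebyshev := ofReal_le_volume_ge_of_integral_le hT.1 hc0 hCt hcontinuous
    fun t ht => hdiss t (hT₁.le.trans ht.1)
  refine (ENNReal.ofReal_le_ofReal ?_).trans (hchebyshev.trans
    (measure_mono fun t ⟨ht, hct⟩ => ⟨⟨ht.1, ht.2.trans hT.2⟩, hE t ht, hct⟩))
  rw [← div_div]
  gcongr
  linarith

end IsBurgersSolution

/-- There exist `C > 0`, `K₁ > 1` and `ν₀ ∈ (0,1]` depending only
on `f` and `D`, such that for every `K ≥ K₁` and every `ν ∈ (0,ν₀]`, the set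
`L_K` of times `t ∈ [T₁,T₂]` where (i) `K⁻¹ ≤ |u(t)|_∞` and `max u_x(t) ≤ K`,
(ii) `K⁻¹ν⁻¹ ≤ |u_x(t)|_∞ ≤ Kν⁻¹`, (iii) `|u_{xx}(t)|_∞ ≤ Kν⁻²`, has Lebesgue
measure at least `C`. -/
theorem statement15 (f : ℝ → ℝ) (σ D Ct : ℝ) (hCt : 0 < Ct)
    (hCtb : ∀ ν, 0 < ν → ν ≤ 1 →
      ∀ u : ℝ → ℝ → ℝ, IsBurgersSolution f σ ν u → burgersD u = D →
        ∀ t, 0 ≤ t → sobLp 1 2 (u t) ^ 2 ≤ Ct * ν⁻¹) :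
    ∃ C > 0, ∃ K₁ > (1 : ℝ), ∃ ν₀, 0 < ν₀ ∧ ν₀ ≤ 1 ∧
      ∀ K, K₁ ≤ K → ∀ ν, 0 < ν → ν ≤ ν₀ →
        ∀ u : ℝ → ℝ → ℝ, IsBurgersSolution f σ ν u → burgersD u = D →
          ENNReal.ofReal C ≤ volume
            {t : ℝ | t ∈ Icc (burgersT₁ D Ct) (burgersT₂ σ D Ct) ∧
              (K⁻¹ ≤ sobLp 0 ⊤ (u t) ∧ ∀ x, deriv (u t) x ≤ K) ∧
              (K⁻¹ * ν⁻¹ ≤ sobLp 1 ⊤ (u t) ∧ sobLp 1 ⊤ (u t) ≤ K * ν⁻¹) ∧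
              sobLp 2 ⊤ (u t) ≤ K * (ν ^ 2)⁻¹} := by
  by_cases hex : ∃ ν u, IsBurgersSolution f σ ν u ∧ burgersD u = D
  swap
  · exact ⟨1, one_pos, 2, one_lt_two, 1, one_pos, le_rfl,
      fun _ _ ν _ _ u h hD => absurd ⟨ν, u, h, hD⟩ hex⟩
  obtain ⟨_, _, h₀, hD₀⟩ := hex
  have hD0 : 0 < D := h₀.pos_of_burgersD_le hD₀.le
  have hT₁ : 0 < burgersT₁ D Ct := burgersT₁_pos hD0 hCt
  obtain ⟨A, hA⟩ := exists_sobLp_one_top_le h₀.hf D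
  obtain ⟨R, hR⟩ := exists_sobLp_two_top_le h₀.hf D
  have hT₁₂ := sub_pos.2 (burgersT₁_lt_burgersT₂ (σ := σ) hD0 hCt)
  set c := (D ^ 2)⁻¹ / (32 * (burgersT₂ σ D Ct - burgersT₁ D Ct))
  refine ⟨(D ^ 2)⁻¹ / (32 * Ct), by positivity,
    max 2 (max (2 * D) (max (c / (2 * D))⁻¹ (max A R))), lt_max_of_lt_left one_lt_two,
    min 1 (burgersT₁ D Ct), lt_min one_pos hT₁, min_le_left _ _, fun K hK ν hν hνle u h hD => ?_⟩
  obtain ⟨hν1, hνT₁⟩ := le_min_iff.1 hνle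
  obtain ⟨-, h2DK, hcK, hAK, hRK⟩ := by simpa only [max_le_iff] using hK
  refine (h.ofReal_le_volume_energy_ge_and_energy_spaceDeriv_ge hD.le hCt fun t ht =>
    h.mul_energy_spaceDeriv_le ht (hCtb ν hν hν1 u h hD t ht)).trans
    (measure_mono fun t ⟨ht, hE, hEx⟩ => ?_)
  have ht0 : 0 ≤ t := hT₁.le.trans ht.1
  have hlower : K⁻¹ ≤ c / (2 * D) := inv_le_of_inv_le₀ (by positivity) hcK
  exact ⟨ht, ⟨(inv_anti₀ (by positivity) h2DK).trans (h.le_sobLp_top_of_sq_le_energy ht0 hE),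
      fun x => (h.spaceDeriv_le_of_burgersD_le hD.le ht0 x).trans (by linarith)⟩,
    ⟨le_trans (by gcongr) (h.div_mul_inv_le_sobLp_one_top hD.le ht0 hEx),
      (hA σ ν u h hD.le hν1 t ht0).trans (by gcongr)⟩,
    (hR σ ν u h hD.le hν1 t (hνT₁.trans ht.1)).trans (by gcongr)⟩
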